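/- For every integer n ≥ 2, the triple of rational numbers ((2n+1)/2, n+1, (2n+1)/(2n−1)) does not satisfy the Jankins–Neumann–Naimi condition: there do not exist relatively prime integers m and a with 0 < a < m, together with a permutation σ of {1, 2, 3}, such that t_{σ(1)} > m/a, t_{σ(2)} > m/(m−a), and t_{σ(3)} > m, where (t_1, t_2, t_3) = ((2n+1)/2, n+1, (2n+1)/(2n−1)). -/

import Mathlib

/-!
The condition is an obstruction on pairs: it forces `1 / t i + 1 / t j < 1` for all `i ≠ j`.
Indeed it bounds `1 / t (σ i)` strictly by `c i / m`, where `c = (a, m - a, 1, …, 1)`, and any two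
entries of `c` at different indices add up to at most `m`. The first and last parameters of
Watson's family are complementary, `2 / (2n + 1) + (2n - 1) / (2n + 1) = 1`, so they rule the
condition out whatever the middle parameter is.
-/

section JankinsNeumannNaimi

variable {K : Type*} [Field K] [LinearOrder K] {p : ℕ} {m a : ℤ}

/-- The Jankins–Neumann–Naimi condition on Seifert parameters `t`, which characterises the
existence of a horizontal foliation on `S(0; -1, t)`. There are `p + 2` parameters, indexed from
`0`, so the indices `3, 4, …` of the usual formulation are the `i.succ.succ` with `i : Fin p`. -/
def JankinsNeumannNaimi (t : Fin (p + 2) → K) : Prop :=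
  ∃ (m a : ℤ) (σ : Equiv.Perm (Fin (p + 2))),
    0 < a ∧ a < m ∧ IsCoprime m a ∧
    t (σ 0) > (m : K) / (a : K) ∧
    t (σ 1) > (m : K) / ((m : K) - (a : K)) ∧
    ∀ i : Fin p, t (σ i.succ.succ) > (m : K)

theorem jankinsNeumannNaimi_fin_three_iff {t : Fin 3 → K} :
    JankinsNeumannNaimi t ↔ ∃ (m a : ℤ) (σ : Equiv.Perm (Fin 3)),
      0 < a ∧ a < m ∧ IsCoprime m a ∧
      t (σ 0) > (m : K) / (a : K) ∧
      t (σ 1) > (m : K) / ((m : K) - (a : K)) ∧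
      t (σ 2) > (m : K) := by
  simp only [JankinsNeumannNaimi, Fin.forall_fin_one]
  rfl

/-- The denominators `(a, m - a, 1, …, 1)` of the lower bounds `m / a, m / (m - a), m, …, m` in the
Jankins–Neumann–Naimi condition, as integers so that all the bounds read `m / c i`. -/
def boundDenom (p : ℕ) (m a : ℤ) : Fin (p + 2) → ℤ :=
  Fin.cons a (Fin.cons (m - a) fun _ => 1)

theorem boundDenom_pos (ha : 0 < a) (ham : a < m) (i : Fin (p + 2)) : 0 < boundDenom p m a i := by
  refine Fin.cases ha (Fin.cases ?_ fun _ => ?_) i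
  · exact sub_pos.2 ham
  · exact one_pos

theorem boundDenom_add_le (ha : 0 < a) (ham : a < m) {i j : Fin (p + 2)} (hij : i ≠ j) :
    boundDenom p m a i + boundDenom p m a j ≤ m := by
  wlog h_lt : i < j generalizing i j
  · rw [add_comm]
    exact this hij.symm (hij.lt_or_gt.resolve_left h_lt)
  obtain ⟨j, rfl⟩ := Fin.exists_succ_eq.2 (Fin.ne_zero_of_lt h_lt)
  cases i using Fin.cases with
  | zero => cases j using Fin.cases <;> simp only [boundDenom, Fin.cons_zero, Fin.cons_succ] <;> lia
  | succ i =>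
    obtain ⟨j, rfl⟩ := Fin.exists_succ_eq.2 (Fin.ne_zero_of_lt (Fin.succ_lt_succ_iff.1 h_lt))
    cases i using Fin.cases <;> simp only [boundDenom, Fin.cons_zero, Fin.cons_succ] <;> lia

theorem JankinsNeumannNaimi.exists_div_boundDenom_lt {t : Fin (p + 2) → K}
    (ht : JankinsNeumannNaimi t) :
    ∃ (m a : ℤ) (σ : Equiv.Perm (Fin (p + 2))), 0 < a ∧ a < m ∧
      ∀ i, (m : K) / boundDenom p m a i < t (σ i) := by
  obtain ⟨m, a, σ, ha, ham, -, h_zero, h_one, h_rest⟩ := ht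
  refine ⟨m, a, σ, ha, ham, Fin.cases h_zero (Fin.cases ?_ fun i => ?_)⟩
  · simpa [boundDenom] using h_one
  · simpa [boundDenom] using h_rest i

theorem JankinsNeumannNaimi.inv_add_inv_lt_one [IsStrictOrderedRing K] {t : Fin (p + 2) → K}
    (ht : JankinsNeumannNaimi t) {i j : Fin (p + 2)} (hij : i ≠ j) : (t i)⁻¹ + (t j)⁻¹ < 1 := by
  obtain ⟨m, a, σ, ha, ham, h_bound⟩ := ht.exists_div_boundDenom_lt
  obtain ⟨i, rfl⟩ := σ.surjective i
  obtain ⟨j, rfl⟩ := σ.surjective j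
  have hm : (0 : K) < m := Int.cast_pos.2 (ha.trans ham)
  have inv_lt (k : Fin (p + 2)) : (t (σ k))⁻¹ < boundDenom p m a k / m := by
    rw [← inv_div]
    exact inv_strictAnti₀ (div_pos hm (Int.cast_pos.2 (boundDenom_pos ha ham k))) (h_bound k)
  have denom_add_le : (boundDenom p m a i + boundDenom p m a j : K) ≤ m := by
    exact_mod_cast boundDenom_add_le ha ham (ne_of_apply_ne σ hij)
  calc (t (σ i))⁻¹ + (t (σ j))⁻¹
      < boundDenom p m a i / m + boundDenom p m a j / m := add_lt_add (inv_lt i) (inv_lt j)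
    _ = (boundDenom p m a i + boundDenom p m a j) / m := (add_div _ _ _).symm
    _ ≤ 1 := (div_le_one hm).2 denom_add_le

end JankinsNeumannNaimi

theorem watson_inv_add_inv_eq_one {K : Type*} [Field K] {x : K} (hx : 2 * x + 1 ≠ 0) :
    ((2 * x + 1) / 2)⁻¹ + ((2 * x + 1) / (2 * x - 1))⁻¹ = 1 := by
  rw [inv_div, inv_div, ← add_div, div_eq_one_iff_eq hx]
  ring

theorem watson_family_no_horizontal_foliation_general {K : Type*} [Field K] [LinearOrder K]
    [IsStrictOrderedRing K] {x : K} (hx : 1 / 2 < x) (z : K) :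
    ¬ JankinsNeumannNaimi ![(2 * x + 1) / 2, z, (2 * x + 1) / (2 * x - 1)] := by
  intro h
  have h_lt := h.inv_add_inv_lt_one (i := 0) (j := 2) (by decide)
  exact h_lt.ne (watson_inv_add_inv_eq_one (by linarith))

/-- For `n ≥ 2`, the triple `((2n+1)/2, n+1, (2n+1)/(2n-1))` does not satisfy the
Jankins–Neumann–Naimi condition: there are no relatively prime integers `0 < a < m`
and permutation `σ` of `{1,2,3}` with `t_{σ(1)} > m/a`, `t_{σ(2)} > m/(m-a)`,
`t_{σ(3)} > m`. -/
theorem watson_family_no_horizontal_foliation (n : ℤ) (hn : 2 ≤ n)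
    (t : Fin 3 → ℚ)
    (ht : t = ![(2 * (n : ℚ) + 1) / 2, (n : ℚ) + 1, (2 * (n : ℚ) + 1) / (2 * (n : ℚ) - 1)]) :
    ¬ ∃ (m a : ℤ) (σ : Equiv.Perm (Fin 3)),
        0 < a ∧ a < m ∧ IsCoprime m a ∧
        t (σ 0) > (m : ℚ) / (a : ℚ) ∧
        t (σ 1) > (m : ℚ) / ((m : ℚ) - (a : ℚ)) ∧
        t (σ 2) > (m : ℚ) := by
  have hn' : (2 : ℚ) ≤ n := by exact_mod_cast hn
  rw [ht, ← jankinsNeumannNaimi_fin_three_iff]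
  exact watson_family_no_horizontal_foliation_general (by linarith) _
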